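/- Consider SO(n)/SO(2)×SO(n−3) as a 6-symmetric space with canonical f-structures f₁, f₂, f₃. For s, t > 0: f₁ satisfies the NKf condition for (s,t) — that is, (1/2)[f₁X, f₁²X]_𝔪 + U_{s,t}(f₁X, f₁²X) − f₁(U_{s,t}(f₁X, f₁X)) = 0 for all X ∈ 𝔪 — if and only if s = 1; and f₂ and f₃ satisfy the NKf condition for all s, t > 0, i.e. they are nearly Kähler f-structures with respect to every invariant Riemannian metric. -/

import Mathlib

open Matrix

namespace FlagMfld

variable {n : ℕ}

/-- Membership in `so(n)`: real skew-symmetric `n×n` matrices. -/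
def inSO (X : Matrix (Fin n) (Fin n) ℝ) : Prop := Xᵀ = -X

/-- The isotropy subalgebra `𝔥 ≅ so(2) ⊕ so(n-3)`: skew matrices whose only (possibly)
nonzero entries are `H₂₃`, `H₃₂` and `H_{ij}` with `i,j ≥ 4` (1-based indexing; indices are
0-based in the formalization, so the allowed positions are `(1,2)`, `(2,1)` and `i,j ≥ 3`). -/
def inH (X : Matrix (Fin n) (Fin n) ℝ) : Prop :=
  Xᵀ = -X ∧ ∀ i j : Fin n, X i j ≠ 0 →
    (i.val = 1 ∧ j.val = 2) ∨ (i.val = 2 ∧ j.val = 1) ∨ (3 ≤ i.val ∧ 3 ≤ j.val)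

/-- The canonical reductive complement `𝔪`: skew matrices with `S₂₃ = 0` and `S_{ij} = 0`
for all `i,j ≥ 4` (1-based). -/
def inM (X : Matrix (Fin n) (Fin n) ℝ) : Prop :=
  Xᵀ = -X ∧ (∀ i j : Fin n, i.val = 1 → j.val = 2 → X i j = 0) ∧
    ∀ i j : Fin n, 3 ≤ i.val → 3 ≤ j.val → X i j = 0

/-- `𝔪₁`: only `S₁₂`, `S₁₃` (and skew partners) may be nonzero. -/
def inM1 (X : Matrix (Fin n) (Fin n) ℝ) : Prop :=
  Xᵀ = -X ∧ ∀ i j : Fin n, X i j ≠ 0 →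
    (i.val = 0 ∧ (j.val = 1 ∨ j.val = 2)) ∨ (j.val = 0 ∧ (i.val = 1 ∨ i.val = 2))

/-- `𝔪₂`: only `S_{2j}`, `S_{3j}` for `j ≥ 4` (and skew partners) may be nonzero. -/
def inM2 (X : Matrix (Fin n) (Fin n) ℝ) : Prop :=
  Xᵀ = -X ∧ ∀ i j : Fin n, X i j ≠ 0 →
    ((i.val = 1 ∨ i.val = 2) ∧ 3 ≤ j.val) ∨ ((j.val = 1 ∨ j.val = 2) ∧ 3 ≤ i.val)

/-- `𝔪₃`: only `S_{1j}` for `j ≥ 4` (and skew partners) may be nonzero. -/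
def inM3 (X : Matrix (Fin n) (Fin n) ℝ) : Prop :=
  Xᵀ = -X ∧ ∀ i j : Fin n, X i j ≠ 0 →
    (i.val = 0 ∧ 3 ≤ j.val) ∨ (j.val = 0 ∧ 3 ≤ i.val)

/-- Component along `𝔪₁` of the decomposition `𝔪 = 𝔪₁ ⊕ 𝔪₂ ⊕ 𝔪₃` (entrywise). -/
def p1 (X : Matrix (Fin n) (Fin n) ℝ) : Matrix (Fin n) (Fin n) ℝ :=
  Matrix.of fun i j =>
    if (i.val = 0 ∧ (j.val = 1 ∨ j.val = 2)) ∨ (j.val = 0 ∧ (i.val = 1 ∨ i.val = 2))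
    then X i j else 0

/-- Component along `𝔪₂`. -/
def p2 (X : Matrix (Fin n) (Fin n) ℝ) : Matrix (Fin n) (Fin n) ℝ :=
  Matrix.of fun i j =>
    if ((i.val = 1 ∨ i.val = 2) ∧ 3 ≤ j.val) ∨ ((j.val = 1 ∨ j.val = 2) ∧ 3 ≤ i.val)
    then X i j else 0

/-- Component along `𝔪₃`. -/
def p3 (X : Matrix (Fin n) (Fin n) ℝ) : Matrix (Fin n) (Fin n) ℝ :=
  Matrix.of fun i j =>
    if (i.val = 0 ∧ 3 ≤ j.val) ∨ (j.val = 0 ∧ 3 ≤ i.val) then X i j else 0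

/-- Projection of `so(n)` onto `𝔪` along `𝔥` (kills the entries at `𝔥`-positions). -/
def pM (X : Matrix (Fin n) (Fin n) ℝ) : Matrix (Fin n) (Fin n) ℝ :=
  Matrix.of fun i j =>
    if (i.val = 1 ∧ j.val = 2) ∨ (i.val = 2 ∧ j.val = 1) ∨ (3 ≤ i.val ∧ 3 ≤ j.val)
    then 0 else X i j

/-- Matrix commutator `[X,Y] = XY - YX`. -/
def br (X Y : Matrix (Fin n) (Fin n) ℝ) : Matrix (Fin n) (Fin n) ℝ := X * Y - Y * X

/-- The naturally reductive metric `g₀(X,Y) = (n-1)·Tr(XᵀY)`. -/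
noncomputable def g0 (X Y : Matrix (Fin n) (Fin n) ℝ) : ℝ :=
  ((n : ℝ) - 1) * (Xᵀ * Y).trace

/-- The invariant metric with characteristic numbers `(s,t)`:
`g_{s,t}(X,Y) = g₀(X₁,Y₁) + s·g₀(X₂,Y₂) + t·g₀(X₃,Y₃)`. -/
noncomputable def gst (s t : ℝ) (X Y : Matrix (Fin n) (Fin n) ℝ) : ℝ :=
  g0 (p1 X) (p1 Y) + s * g0 (p2 X) (p2 Y) + t * g0 (p3 X) (p3 Y)

/-- The symmetric part `U_{s,t}` of the Nomizu function of the Levi-Civita connection of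
`g_{s,t}`. -/
noncomputable def Ust (s t : ℝ) (X Y : Matrix (Fin n) (Fin n) ℝ) :
    Matrix (Fin n) (Fin n) ℝ :=
  ((t - s) / 2) • (br (p2 X) (p3 Y) + br (p2 Y) (p3 X)) +
  ((t - 1) / (2 * s)) • (br (p1 X) (p3 Y) + br (p1 Y) (p3 X)) +
  ((s - 1) / (2 * t)) • (br (p1 X) (p2 Y) + br (p1 Y) (p2 X))

/-- The block-diagonal matrix `B₄ = diag(1, [[0,1],[-1,0]], -1, …, -1)`. -/
def B4 : Matrix (Fin n) (Fin n) ℝ :=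
  Matrix.of fun i j =>
    if i.val = 0 ∧ j.val = 0 then 1
    else if i.val = 1 ∧ j.val = 2 then 1
    else if i.val = 2 ∧ j.val = 1 then -1
    else if 3 ≤ i.val ∧ i = j then -1
    else 0

/-- `θ = dΦ|𝔪` for the order-4 automorphism: `θ(X) = B₄ X B₄ᵀ`. -/
def th4 (X : Matrix (Fin n) (Fin n) ℝ) : Matrix (Fin n) (Fin n) ℝ := B4 * X * B4ᵀ

/-- The canonical f-structure `f₀ = (1/2)(θ - θ³)` of the 4-symmetric space. -/
noncomputable def f0 (X : Matrix (Fin n) (Fin n) ℝ) : Matrix (Fin n) (Fin n) ℝ :=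
  (1 / 2 : ℝ) • (th4 X - th4 (th4 (th4 X)))

/-- The block-diagonal matrix `B₆ = diag(1, [[1/2,√3/2],[-√3/2,1/2]], -1, …, -1)`. -/
noncomputable def B6 : Matrix (Fin n) (Fin n) ℝ :=
  Matrix.of fun i j =>
    if i.val = 0 ∧ j.val = 0 then 1
    else if i.val = 1 ∧ j.val = 1 then 1 / 2
    else if i.val = 1 ∧ j.val = 2 then Real.sqrt 3 / 2
    else if i.val = 2 ∧ j.val = 1 then -(Real.sqrt 3 / 2)
    else if i.val = 2 ∧ j.val = 2 then 1 / 2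
    else if 3 ≤ i.val ∧ i = j then -1
    else 0

/-- `θ = dΦ|𝔪` for the order-6 automorphism: `θ(X) = B₆ X B₆ᵀ`. -/
noncomputable def th6 (X : Matrix (Fin n) (Fin n) ℝ) : Matrix (Fin n) (Fin n) ℝ :=
  B6 * X * B6ᵀ

/-- `f₁ = (1/√3)(θ - θ⁵)`. -/
noncomputable def f1 (X : Matrix (Fin n) (Fin n) ℝ) : Matrix (Fin n) (Fin n) ℝ :=
  (1 / Real.sqrt 3) • (th6 X - th6 (th6 (th6 (th6 (th6 X)))))

/-- `f₂ = (1/(2√3))(θ - θ² + θ⁴ - θ⁵)`. -/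
noncomputable def f2 (X : Matrix (Fin n) (Fin n) ℝ) : Matrix (Fin n) (Fin n) ℝ :=
  (1 / (2 * Real.sqrt 3)) •
    (th6 X - th6 (th6 X) + th6 (th6 (th6 (th6 X))) - th6 (th6 (th6 (th6 (th6 X)))))

/-- `f₃ = (1/(2√3))(θ + θ² - θ⁴ - θ⁵)`. -/
noncomputable def f3 (X : Matrix (Fin n) (Fin n) ℝ) : Matrix (Fin n) (Fin n) ℝ :=
  (1 / (2 * Real.sqrt 3)) •
    (th6 X + th6 (th6 X) - th6 (th6 (th6 (th6 X))) - th6 (th6 (th6 (th6 (th6 X)))))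

/-- `f₄ = (1/√3)(θ² - θ⁴)`. -/
noncomputable def f4 (X : Matrix (Fin n) (Fin n) ℝ) : Matrix (Fin n) (Fin n) ℝ :=
  (1 / Real.sqrt 3) • (th6 (th6 X) - th6 (th6 (th6 (th6 X))))

/-- The Killing f-structure condition for `f` w.r.t. the metric with characteristic
numbers `(s,t)`: `(1/2)[X, fX]_𝔪 + U_{s,t}(X, fX) - f(U_{s,t}(X,X)) = 0` for all `X ∈ 𝔪`. -/
def killCond (s t : ℝ) (f : Matrix (Fin n) (Fin n) ℝ → Matrix (Fin n) (Fin n) ℝ) : Prop :=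
  ∀ X : Matrix (Fin n) (Fin n) ℝ, inM X →
    (1 / 2 : ℝ) • pM (br X (f X)) + Ust s t X (f X) - f (Ust s t X X) = 0

/-- The nearly Kähler f-structure condition:
`(1/2)[fX, f²X]_𝔪 + U_{s,t}(fX, f²X) - f(U_{s,t}(fX, fX)) = 0` for all `X ∈ 𝔪`. -/
def nkCond (s t : ℝ) (f : Matrix (Fin n) (Fin n) ℝ → Matrix (Fin n) (Fin n) ℝ) : Prop :=
  ∀ X : Matrix (Fin n) (Fin n) ℝ, inM X →
    (1 / 2 : ℝ) • pM (br (f X) (f (f X))) + Ust s t (f X) (f (f X)) -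
      f (Ust s t (f X) (f X)) = 0

/-- The `G₁f` condition:
`f(2·U_{s,t}(fX, f²X) - f(U_{s,t}(fX, fX)) + f(U_{s,t}(f²X, f²X))) = 0` for all `X ∈ 𝔪`. -/
def g1Cond (s t : ℝ) (f : Matrix (Fin n) (Fin n) ℝ → Matrix (Fin n) (Fin n) ℝ) : Prop :=
  ∀ X : Matrix (Fin n) (Fin n) ℝ, inM X →
    f ((2 : ℝ) • Ust s t (f X) (f (f X)) - f (Ust s t (f X) (f X)) +
      f (Ust s t (f (f X)) (f (f X)))) = 0

end FlagMfld

open FlagMfld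

/-!
Let `J` generate the factor `𝔰𝔬(2)` of `𝔥`. On `𝔪₁` and `𝔪₂` one has `(ad J)² = -1`, and there `θ`
is `±(1/2 + (√3/2) ad J)`, while `θ = -1` on `𝔪₃`. Hence for `A ∈ 𝔪₁`, `B ∈ 𝔪₂`, `C ∈ 𝔪₃`
the canonical f-structures send `A + B + C` to `[J, A] - [J, B]`, `-[J, B]` and `[J, A]`.
All three annihilate `𝔪₃ ⊇ [𝔪₁, 𝔪₂]`, so the last term of the NKf condition vanishes, and for
`f₂` and `f₃` the brackets do too. Since `J` acts trivially on `𝔪₃`, the Jacobi identity gives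
`[[J, A], B] = -[A, [J, B]]`, which reduces the NKf condition for `f₁` to
`((s - 1) / t) [A, [J, B]] = 0`; and `[A, [J, B]]` is not identically zero.
-/

namespace FlagMfld

attribute [local instance] LieRing.ofAssociativeRing

section SkewSingle

variable {ι R : Type*}

theorem exists_ne_zero_of_mul_apply_ne_zero [Fintype ι] [NonUnitalNonAssocSemiring R]
    {X Y : Matrix ι ι R} {i j : ι} (h : (X * Y) i j ≠ 0) : ∃ k, X i k ≠ 0 ∧ Y k j ≠ 0 := by
  rw [mul_apply] at h
  obtain ⟨k, -, hk⟩ := Finset.exists_ne_zero_of_sum_ne_zero h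
  exact ⟨k, left_ne_zero_of_mul hk, right_ne_zero_of_mul hk⟩

theorem exists_ne_zero_of_lie_apply_ne_zero [Fintype ι] [DecidableEq ι] [Ring R]
    {X Y : Matrix ι ι R} {i j : ι}
    (h : ⁅X, Y⁆ i j ≠ 0) : ∃ k, X i k ≠ 0 ∧ Y k j ≠ 0 ∨ Y i k ≠ 0 ∧ X k j ≠ 0 := by
  have hmul : (X * Y) i j ≠ 0 ∨ (Y * X) i j ≠ 0 := by
    contrapose! h
    rw [Ring.lie_def, Matrix.sub_apply, h.1, h.2, sub_zero]
  rcases hmul with hmul | hmul <;> obtain ⟨k, hk⟩ := exists_ne_zero_of_mul_apply_ne_zero hmul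
  exacts [⟨k, .inl hk⟩, ⟨k, .inr hk⟩]

variable [DecidableEq ι]

theorem transpose_lie_eq_neg [Fintype ι] [CommRing R] {X Y : Matrix ι ι R}
    (hX : Xᵀ = -X) (hY : Yᵀ = -Y) : ⁅X, Y⁆ᵀ = -⁅X, Y⁆ :=
  (LieAlgebra.Orthogonal.mem_so ι R _).1 <| (LieAlgebra.Orthogonal.so ι R).lie_mem
    ((LieAlgebra.Orthogonal.mem_so ι R X).2 hX) ((LieAlgebra.Orthogonal.mem_so ι R Y).2 hY)

variable [Ring R]

/-- The elementary skew-symmetric matrix `E_{ij} - E_{ji}`. -/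
def skewSingle (i j : ι) : Matrix ι ι R := single i j 1 - single j i 1

theorem transpose_skewSingle (i j : ι) : (skewSingle i j : Matrix ι ι R)ᵀ = -skewSingle i j := by
  simp [skewSingle]

theorem skewSingle_mul_self [Fintype ι] {i j : ι} (hij : i ≠ j) :
    (skewSingle i j * skewSingle i j : Matrix ι ι R) = -(single i i 1 + single j j 1) := by
  simp only [skewSingle, mul_sub, sub_mul, ne_eq, hij, hij.symm, not_false_eq_true,
    single_mul_single_of_ne, single_mul_single_same, mul_one, zero_sub, sub_zero, neg_add_rev]
  abel

theorem lie_skewSingle_skewSingle [Fintype ι] {i j k : ι} (hij : i ≠ j) (hjk : j ≠ k)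
    (hik : i ≠ k) :
    ⁅(skewSingle i j : Matrix ι ι R), (skewSingle j k : Matrix ι ι R)⁆ = skewSingle i k := by
  rw [Ring.lie_def]
  simp [skewSingle, sub_mul, mul_sub, hij, hij.symm, hjk, hjk.symm, hik, hik.symm]

end SkewSingle

variable {n : ℕ} {s t : ℝ} {H X A B C A' B' : Matrix (Fin n) (Fin n) ℝ}

theorem br_eq_lie (X Y : Matrix (Fin n) (Fin n) ℝ) : br X Y = ⁅X, Y⁆ := rfl

/-! ### The reductive decomposition -/

theorem inM1_zero : inM1 (0 : Matrix (Fin n) (Fin n) ℝ) :=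
  ⟨by rw [transpose_zero, neg_zero], fun _ _ h => absurd rfl h⟩

theorem inM2_zero : inM2 (0 : Matrix (Fin n) (Fin n) ℝ) :=
  ⟨by rw [transpose_zero, neg_zero], fun _ _ h => absurd rfl h⟩

theorem inM1.neg (hA : inM1 A) : inM1 (-A) :=
  ⟨by rw [transpose_neg, hA.1], fun i j h => hA.2 i j (neg_ne_zero.1 h)⟩

theorem inM2.neg (hB : inM2 B) : inM2 (-B) :=
  ⟨by rw [transpose_neg, hB.1], fun i j h => hB.2 i j (neg_ne_zero.1 h)⟩

theorem inM3.sub (hA : inM3 A) (hB : inM3 B) : inM3 (A - B) := by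
  refine ⟨by rw [transpose_sub, hA.1, hB.1]; abel, fun i j h => ?_⟩
  by_cases hAij : A i j = 0
  · exact hB.2 i j fun hBij => h (by rw [Matrix.sub_apply, hAij, hBij, sub_zero])
  · exact hA.2 i j hAij

theorem apply_self_eq_zero (hX : Xᵀ = -X) (i : Fin n) : X i i = 0 := by
  have h : X i i = -X i i := congrFun (congrFun hX i) i
  linarith

theorem inM1_p1 (hX : Xᵀ = -X) : inM1 (p1 X) := by
  have h (i j) : X j i = -X i j := congrFun (congrFun hX i) j
  refine ⟨?_, fun i j hij => ?_⟩
  · ext i j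
    simp only [transpose_apply, p1, of_apply, Matrix.neg_apply]
    grind
  · simp only [p1, of_apply] at hij
    grind

theorem inM2_p2 (hX : Xᵀ = -X) : inM2 (p2 X) := by
  have h (i j) : X j i = -X i j := congrFun (congrFun hX i) j
  refine ⟨?_, fun i j hij => ?_⟩
  · ext i j
    simp only [transpose_apply, p2, of_apply, Matrix.neg_apply]
    grind
  · simp only [p2, of_apply] at hij
    grind

theorem inM3_p3 (hX : Xᵀ = -X) : inM3 (p3 X) := by
  have h (i j) : X j i = -X i j := congrFun (congrFun hX i) j
  refine ⟨?_, fun i j hij => ?_⟩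
  · ext i j
    simp only [transpose_apply, p3, of_apply, Matrix.neg_apply]
    grind
  · simp only [p3, of_apply] at hij
    grind

theorem inM.p1_add_p2_add_p3 (hX : inM X) : p1 X + p2 X + p3 X = X := by
  obtain ⟨hskew, h12, h33⟩ := hX
  have h (i j) : X j i = -X i j := congrFun (congrFun hskew i) j
  have hself := apply_self_eq_zero hskew
  ext i j
  have h0 : i.val = j.val → X i j = 0 := fun hij => Fin.ext hij ▸ hself i
  simp only [Matrix.add_apply, p1, p2, p3, of_apply]
  grind

theorem inM3.inM (hC : inM3 C) : inM C := by
  refine ⟨hC.1, fun i j hi hj => ?_, fun i j hi hj => ?_⟩ <;>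
    · by_contra h
      have := hC.2 i j h
      omega

theorem inM1.add_inM2 (hA : inM1 A) (hB : inM2 B) : inM (A + B) := by
  refine ⟨by rw [transpose_add, hA.1, hB.1]; abel, fun i j hi hj => ?_, fun i j hi hj => ?_⟩ <;>
    · have := hA.2 i j
      have := hB.2 i j
      rw [Matrix.add_apply]
      grind

theorem p1_add (hA : inM1 A) (hB : inM2 B) : p1 (A + B) = A := by
  ext i j
  have := hA.2 i j
  have := hB.2 i j
  simp only [p1, of_apply, Matrix.add_apply]
  grind

theorem p2_add (hA : inM1 A) (hB : inM2 B) : p2 (A + B) = B := by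
  ext i j
  have := hA.2 i j
  have := hB.2 i j
  simp only [p2, of_apply, Matrix.add_apply]
  grind

theorem p3_add (hA : inM1 A) (hB : inM2 B) : p3 (A + B) = 0 := by
  ext i j
  have := hA.2 i j
  have := hB.2 i j
  simp only [p3, of_apply, Matrix.add_apply, Matrix.zero_apply]
  grind

theorem pM_add_of_inH_of_inM (hH : inH H) (hX : inM X) : pM (H + X) = X := by
  obtain ⟨hskew, h12, h33⟩ := hX
  have h21 (i j) : X j i = -X i j := congrFun (congrFun hskew i) j
  ext i j
  have := hH.2 i j
  simp only [pM, of_apply, Matrix.add_apply]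
  grind

/-! ### Bracket relations -/

theorem inH.lie_inM1 (hH : inH H) (hA : inM1 A) : inM1 ⁅H, A⁆ := by
  refine ⟨transpose_lie_eq_neg hH.1 hA.1, fun i j hij => ?_⟩
  obtain ⟨k, ⟨h₁, h₂⟩ | ⟨h₁, h₂⟩⟩ := exists_ne_zero_of_lie_apply_ne_zero hij
  · have := hH.2 _ _ h₁
    have := hA.2 _ _ h₂
    omega
  · have := hA.2 _ _ h₁
    have := hH.2 _ _ h₂
    omega

theorem inH.lie_inM2 (hH : inH H) (hB : inM2 B) : inM2 ⁅H, B⁆ := by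
  refine ⟨transpose_lie_eq_neg hH.1 hB.1, fun i j hij => ?_⟩
  obtain ⟨k, ⟨h₁, h₂⟩ | ⟨h₁, h₂⟩⟩ := exists_ne_zero_of_lie_apply_ne_zero hij
  · have := hH.2 _ _ h₁
    have := hB.2 _ _ h₂
    omega
  · have := hB.2 _ _ h₁
    have := hH.2 _ _ h₂
    omega

theorem inM1.lie_inM1 (hA : inM1 A) (hA' : inM1 A') : inH ⁅A, A'⁆ := by
  have hskew := transpose_lie_eq_neg hA.1 hA'.1
  refine ⟨hskew, fun i j hij => ?_⟩
  have hne : i.val ≠ j.val := fun h => hij (Fin.ext h ▸ apply_self_eq_zero hskew i)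
  obtain ⟨k, ⟨h₁, h₂⟩ | ⟨h₁, h₂⟩⟩ := exists_ne_zero_of_lie_apply_ne_zero hij
  · have := hA.2 _ _ h₁
    have := hA'.2 _ _ h₂
    omega
  · have := hA'.2 _ _ h₁
    have := hA.2 _ _ h₂
    omega

theorem inM2.lie_inM2 (hB : inM2 B) (hB' : inM2 B') : inH ⁅B, B'⁆ := by
  have hskew := transpose_lie_eq_neg hB.1 hB'.1
  refine ⟨hskew, fun i j hij => ?_⟩
  have hne : i.val ≠ j.val := fun h => hij (Fin.ext h ▸ apply_self_eq_zero hskew i)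
  obtain ⟨k, ⟨h₁, h₂⟩ | ⟨h₁, h₂⟩⟩ := exists_ne_zero_of_lie_apply_ne_zero hij
  · have := hB.2 _ _ h₁
    have := hB'.2 _ _ h₂
    omega
  · have := hB'.2 _ _ h₁
    have := hB.2 _ _ h₂
    omega

theorem inM1.lie_inM2 (hA : inM1 A) (hB : inM2 B) : inM3 ⁅A, B⁆ := by
  refine ⟨transpose_lie_eq_neg hA.1 hB.1, fun i j hij => ?_⟩
  obtain ⟨k, ⟨h₁, h₂⟩ | ⟨h₁, h₂⟩⟩ := exists_ne_zero_of_lie_apply_ne_zero hij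
  · have := hA.2 _ _ h₁
    have := hB.2 _ _ h₂
    omega
  · have := hB.2 _ _ h₁
    have := hA.2 _ _ h₂
    omega

theorem inH.add (hA : inH A) (hB : inH B) : inH (A + B) := by
  refine ⟨by rw [transpose_add, hA.1, hB.1]; abel, fun i j h => ?_⟩
  by_cases hAij : A i j = 0
  · exact hB.2 i j fun hBij => h (by rw [Matrix.add_apply, hAij, hBij, add_zero])
  · exact hA.2 i j hAij

theorem pM_lie (hA : inM1 A) (hB : inM2 B) (hA' : inM1 A') (hB' : inM2 B') :
    pM ⁅A + B, A' + B'⁆ = ⁅A, B'⁆ - ⁅A', B⁆ := by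
  have hsplit : ⁅A + B, A' + B'⁆ = (⁅A, A'⁆ + ⁅B, B'⁆) + (⁅A, B'⁆ - ⁅A', B⁆) := by
    rw [add_lie, lie_add, lie_add, ← lie_skew A' B]
    abel
  rw [hsplit, pM_add_of_inH_of_inM ((hA.lie_inM1 hA').add (hB.lie_inM2 hB'))
    ((hA.lie_inM2 hB').sub (hA'.lie_inM2 hB)).inM]

theorem Ust_add_add (hA : inM1 A) (hB : inM2 B) (hA' : inM1 A') (hB' : inM2 B') :
    Ust s t (A + B) (A' + B') = ((s - 1) / (2 * t)) • (⁅A, B'⁆ + ⁅A', B⁆) := by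
  simp only [Ust, br_eq_lie, p1_add hA hB, p2_add hA hB, p3_add hA hB, p1_add hA' hB',
    p2_add hA' hB', p3_add hA' hB', lie_zero, add_zero, smul_zero, zero_add]

/-! ### The automorphism `θ` -/

/-- The generator `E₂₃ - E₃₂` of the factor `𝔰𝔬(2)` of `𝔥`; it rotates the plane of the two
middle coordinates. -/
def so2Gen (n : ℕ) : Matrix (Fin n) (Fin n) ℝ :=
  Matrix.of fun i j =>
    if i.val = 1 ∧ j.val = 2 then 1 else if i.val = 2 ∧ j.val = 1 then -1 else 0

theorem so2Gen_eq_skewSingle {i j : Fin n} (hi : i.val = 1) (hj : j.val = 2) :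
    so2Gen n = skewSingle i j := by
  ext k l
  simp only [so2Gen, skewSingle, of_apply, Matrix.sub_apply, single_apply, Fin.ext_iff, hi, hj]
  grind

theorem inH_so2Gen : inH (so2Gen n) := by
  refine ⟨?_, fun i j hij => ?_⟩
  · ext i j
    simp only [transpose_apply, so2Gen, of_apply, Matrix.neg_apply]
    grind
  · simp only [so2Gen, of_apply] at hij
    grind

theorem so2Gen_mul_self (hn : 3 ≤ n) : so2Gen n * so2Gen n =
    -diagonal fun i => if i.val = 1 ∨ i.val = 2 then 1 else 0 := by
  have hne : (⟨1, by omega⟩ : Fin n) ≠ ⟨2, by omega⟩ := by simp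
  rw [so2Gen_eq_skewSingle (i := ⟨1, by omega⟩) (j := ⟨2, by omega⟩) rfl rfl,
    skewSingle_mul_self hne]
  ext i j
  simp only [Matrix.neg_apply, Matrix.add_apply, single_apply, diagonal_apply, Fin.ext_iff]
  grind

theorem so2Gen_apply_ne_zero {i j : Fin n} (h : so2Gen n i j ≠ 0) :
    i.val = 1 ∧ j.val = 2 ∨ i.val = 2 ∧ j.val = 1 := by
  simp only [so2Gen, of_apply] at h
  grind

/-- The diagonal part of `B₆`. -/
noncomputable def diagB6 (i : Fin n) : ℝ :=
  if i.val = 0 then 1 else if i.val < 3 then 1 / 2 else -1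

theorem B6_eq_diagonal_add_smul_so2Gen :
    (B6 : Matrix (Fin n) (Fin n) ℝ) = diagonal diagB6 + (√3 / 2) • so2Gen n := by
  ext i j
  simp only [B6, so2Gen, diagB6, of_apply, Matrix.add_apply, Matrix.smul_apply, diagonal_apply,
    Fin.ext_iff, smul_eq_mul]
  grind

theorem th6_eq (X : Matrix (Fin n) (Fin n) ℝ) :
    th6 X = diagonal diagB6 * X * diagonal diagB6 +
      (√3 / 2) • (so2Gen n * X * diagonal diagB6 - diagonal diagB6 * (X * so2Gen n)) -
      (3 / 4 : ℝ) • (so2Gen n * X * so2Gen n) := by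
  have h3 : √3 / 2 * (√3 / 2) = 3 / 4 := by
    rw [div_mul_div_comm, Real.mul_self_sqrt (by norm_num)]
    norm_num
  rw [th6, B6_eq_diagonal_add_smul_so2Gen, transpose_add, transpose_smul, diagonal_transpose,
    inH_so2Gen.1, ← h3]
  simp only [add_mul, mul_add, Matrix.mul_assoc, smul_mul_assoc, mul_smul_comm, mul_neg, smul_neg]
  module

theorem isLinearMap_th6 : IsLinearMap ℝ (th6 (n := n)) where
  map_add X Y := by rw [th6, mul_add, add_mul, th6, th6]
  map_smul c X := by rw [th6, mul_smul_comm, smul_mul_assoc, th6]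

/-- `X` couples the plane rotated by `so2Gen` to coordinates on which `B₆` acts by the scalar `ε`.
This treats `𝔪₁` (`ε = 1`) and `𝔪₂` (`ε = -1`) uniformly. -/
def CouplesPlane (ε : ℝ) (X : Matrix (Fin n) (Fin n) ℝ) : Prop :=
  ∀ i j, X i j ≠ 0 →
    ((i.val = 1 ∨ i.val = 2) ∧ ¬(j.val = 1 ∨ j.val = 2) ∧ diagB6 j = ε) ∨
    ((j.val = 1 ∨ j.val = 2) ∧ ¬(i.val = 1 ∨ i.val = 2) ∧ diagB6 i = ε)

theorem inM1.couplesPlane (hA : inM1 A) : CouplesPlane 1 A := fun i j hij => by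
  have := hA.2 i j hij
  simp only [diagB6]
  grind

theorem inM2.couplesPlane (hB : inM2 B) : CouplesPlane (-1) B := fun i j hij => by
  have := hB.2 i j hij
  simp only [diagB6]
  grind

variable {ε : ℝ}

namespace CouplesPlane

theorem so2Gen_mul_mul_so2Gen (hX : CouplesPlane ε X) : so2Gen n * X * so2Gen n = 0 := by
  ext i j
  by_contra h
  obtain ⟨l, hl, hlj⟩ := exists_ne_zero_of_mul_apply_ne_zero h
  obtain ⟨k, hik, hkl⟩ := exists_ne_zero_of_mul_apply_ne_zero hl
  have := so2Gen_apply_ne_zero hik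
  have := so2Gen_apply_ne_zero hlj
  have := hX k l hkl
  omega

theorem so2Gen_lie_so2Gen_lie (hn : 3 ≤ n) (hX : CouplesPlane ε X) :
    ⁅so2Gen n, ⁅so2Gen n, X⁆⁆ = -X := by
  have hexpand : ⁅so2Gen n, ⁅so2Gen n, X⁆⁆ = so2Gen n * so2Gen n * X + X * (so2Gen n * so2Gen n) -
      (2 : ℝ) • (so2Gen n * X * so2Gen n) := by
    simp only [Ring.lie_def, mul_sub, sub_mul, Matrix.mul_assoc]
    module
  rw [hexpand, hX.so2Gen_mul_mul_so2Gen, so2Gen_mul_self hn]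
  ext i j
  have := hX i j
  simp only [neg_mul, mul_neg, smul_zero, sub_zero, Matrix.add_apply, Matrix.neg_apply,
    diagonal_mul, mul_diagonal]
  grind

theorem diagonal_mul_mul_diagonal (hX : CouplesPlane ε X) :
    diagonal diagB6 * X * diagonal diagB6 = (ε / 2) • X := by
  have hplane (i : Fin n) (hi : i.val = 1 ∨ i.val = 2) : diagB6 i = 1 / 2 := by
    simp only [diagB6]
    grind
  ext i j
  have := hX i j
  simp only [mul_diagonal, diagonal_mul, Matrix.smul_apply, smul_eq_mul]
  grind

theorem so2Gen_mul_mul_diagonal (hX : CouplesPlane ε X) :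
    so2Gen n * X * diagonal diagB6 = ε • (so2Gen n * X) := by
  ext i j
  rw [mul_diagonal, Matrix.smul_apply, smul_eq_mul, mul_comm]
  by_cases h : (so2Gen n * X) i j = 0
  · rw [h, mul_zero, mul_zero]
  · obtain ⟨k, hik, hkj⟩ := exists_ne_zero_of_mul_apply_ne_zero h
    have := so2Gen_apply_ne_zero hik
    have := hX k j hkj
    grind

theorem diagonal_mul_mul_so2Gen (hX : CouplesPlane ε X) :
    diagonal diagB6 * (X * so2Gen n) = ε • (X * so2Gen n) := by
  ext i j
  rw [diagonal_mul, Matrix.smul_apply, smul_eq_mul]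
  by_cases h : (X * so2Gen n) i j = 0
  · rw [h, mul_zero, mul_zero]
  · obtain ⟨k, hik, hkj⟩ := exists_ne_zero_of_mul_apply_ne_zero h
    have := so2Gen_apply_ne_zero hkj
    have := hX i k hik
    grind

theorem so2Gen_lie (hX : CouplesPlane ε X) : CouplesPlane ε ⁅so2Gen n, X⁆ := fun i j hij => by
  obtain ⟨k, ⟨h₁, h₂⟩ | ⟨h₁, h₂⟩⟩ := exists_ne_zero_of_lie_apply_ne_zero hij
  · have := so2Gen_apply_ne_zero h₁
    have := hX _ _ h₂
    grind
  · have := hX _ _ h₁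
    have := so2Gen_apply_ne_zero h₂
    grind

theorem th6_apply (hX : CouplesPlane ε X) :
    th6 X = ε • ((1 / 2 : ℝ) • X + (√3 / 2) • ⁅so2Gen n, X⁆) := by
  rw [th6_eq, hX.diagonal_mul_mul_diagonal, hX.so2Gen_mul_mul_diagonal,
    hX.diagonal_mul_mul_so2Gen, hX.so2Gen_mul_mul_so2Gen, Ring.lie_def]
  module

theorem th6_th6 (hn : 3 ≤ n) (hε : ε ^ 2 = 1) (hX : CouplesPlane ε X) :
    th6 (th6 X) = ε • th6 X - X := by
  have h3 : √3 ^ 2 = 3 := Real.sq_sqrt (by norm_num)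
  have hlie : th6 ⁅so2Gen n, X⁆ = ε • ((1 / 2 : ℝ) • ⁅so2Gen n, X⁆ - (√3 / 2) • X) := by
    rw [hX.so2Gen_lie.th6_apply, hX.so2Gen_lie_so2Gen_lie hn, smul_neg, sub_eq_add_neg]
  rw [congrArg th6 hX.th6_apply, isLinearMap_th6.map_smul, isLinearMap_th6.map_add,
    isLinearMap_th6.map_smul, isLinearMap_th6.map_smul, hlie, hX.th6_apply]
  match_scalars <;> grind

theorem th6_th6_th6 (hn : 3 ≤ n) (hε : ε ^ 2 = 1) (hX : CouplesPlane ε X) :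
    th6 (th6 (th6 X)) = -(ε • X) := by
  rw [hX.th6_th6 hn hε, isLinearMap_th6.map_sub, isLinearMap_th6.map_smul, hX.th6_th6 hn hε]
  match_scalars <;> grind

theorem f1_apply (hn : 3 ≤ n) (hε : ε ^ 2 = 1) (hX : CouplesPlane ε X) :
    f1 X = ε • ⁅so2Gen n, X⁆ := by
  have h0 : √3 ≠ 0 := by positivity
  rw [f1, hX.th6_th6_th6 hn hε, isLinearMap_th6.map_neg, isLinearMap_th6.map_neg,
    isLinearMap_th6.map_smul, isLinearMap_th6.map_smul, hX.th6_th6 hn hε, hX.th6_apply]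
  match_scalars <;> field_simp <;> grind

theorem f2_apply (hn : 3 ≤ n) (hε : ε ^ 2 = 1) (hX : CouplesPlane ε X) :
    f2 X = ((ε - 1) / 2) • ⁅so2Gen n, X⁆ := by
  have h0 : √3 ≠ 0 := by positivity
  rw [f2, hX.th6_th6_th6 hn hε, isLinearMap_th6.map_neg, isLinearMap_th6.map_neg,
    isLinearMap_th6.map_smul, isLinearMap_th6.map_smul, hX.th6_th6 hn hε, hX.th6_apply]
  match_scalars <;> field_simp <;> grind

theorem f3_apply (hn : 3 ≤ n) (hε : ε ^ 2 = 1) (hX : CouplesPlane ε X) :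
    f3 X = ((ε + 1) / 2) • ⁅so2Gen n, X⁆ := by
  have h0 : √3 ≠ 0 := by positivity
  rw [f3, hX.th6_th6_th6 hn hε, isLinearMap_th6.map_neg, isLinearMap_th6.map_neg,
    isLinearMap_th6.map_smul, isLinearMap_th6.map_smul, hX.th6_th6 hn hε, hX.th6_apply]
  match_scalars <;> field_simp <;> grind

end CouplesPlane

theorem inM3.so2Gen_mul (hC : inM3 C) : so2Gen n * C = 0 := by
  ext i j
  by_contra h
  obtain ⟨k, hik, hkj⟩ := exists_ne_zero_of_mul_apply_ne_zero h
  have := so2Gen_apply_ne_zero hik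
  have := hC.2 k j hkj
  omega

theorem inM3.mul_so2Gen (hC : inM3 C) : C * so2Gen n = 0 := by
  ext i j
  by_contra h
  obtain ⟨k, hik, hkj⟩ := exists_ne_zero_of_mul_apply_ne_zero h
  have := so2Gen_apply_ne_zero hkj
  have := hC.2 i k hik
  omega

theorem inM3.so2Gen_lie (hC : inM3 C) : ⁅so2Gen n, C⁆ = 0 := by
  rw [Ring.lie_def, hC.so2Gen_mul, hC.mul_so2Gen, sub_zero]

theorem inM3.th6_apply (hC : inM3 C) : th6 C = -C := by
  rw [th6_eq, hC.so2Gen_mul, hC.mul_so2Gen]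
  ext i j
  have := hC.2 i j
  simp only [zero_mul, mul_zero, sub_zero, smul_zero, add_zero, mul_diagonal, diagonal_mul,
    Matrix.neg_apply, diagB6]
  grind

/-! ### The canonical f-structures -/

theorem isLinearMap_f1 : IsLinearMap ℝ (f1 (n := n)) where
  map_add X Y := by simp only [f1, isLinearMap_th6.map_add]; module
  map_smul c X := by simp only [f1, isLinearMap_th6.map_smul]; module

theorem isLinearMap_f2 : IsLinearMap ℝ (f2 (n := n)) where
  map_add X Y := by simp only [f2, isLinearMap_th6.map_add]; module
  map_smul c X := by simp only [f2, isLinearMap_th6.map_smul]; module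

theorem isLinearMap_f3 : IsLinearMap ℝ (f3 (n := n)) where
  map_add X Y := by simp only [f3, isLinearMap_th6.map_add]; module
  map_smul c X := by simp only [f3, isLinearMap_th6.map_smul]; module

theorem inM3.f1_apply (hC : inM3 C) : f1 C = 0 := by
  simp only [f1, hC.th6_apply, isLinearMap_th6.map_neg]
  module

theorem inM3.f2_apply (hC : inM3 C) : f2 C = 0 := by
  simp only [f2, hC.th6_apply, isLinearMap_th6.map_neg]
  module

theorem inM3.f3_apply (hC : inM3 C) : f3 C = 0 := by
  simp only [f3, hC.th6_apply, isLinearMap_th6.map_neg]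
  module

theorem f1_eq_lie_p1_add_lie_p2 (hn : 3 ≤ n) (hX : inM X) :
    f1 X = ⁅so2Gen n, p1 X⁆ + ⁅so2Gen n, -p2 X⁆ := by
  conv_lhs => rw [← hX.p1_add_p2_add_p3]
  rw [isLinearMap_f1.map_add, isLinearMap_f1.map_add, (inM3_p3 hX.1).f1_apply,
    (inM1_p1 hX.1).couplesPlane.f1_apply hn (by norm_num),
    (inM2_p2 hX.1).couplesPlane.f1_apply hn (by norm_num), lie_neg]
  module

theorem f2_eq_lie_p2 (hn : 3 ≤ n) (hX : inM X) : f2 X = ⁅so2Gen n, -p2 X⁆ := by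
  conv_lhs => rw [← hX.p1_add_p2_add_p3]
  rw [isLinearMap_f2.map_add, isLinearMap_f2.map_add, (inM3_p3 hX.1).f2_apply,
    (inM1_p1 hX.1).couplesPlane.f2_apply hn (by norm_num),
    (inM2_p2 hX.1).couplesPlane.f2_apply hn (by norm_num), lie_neg]
  module

theorem f3_eq_lie_p1 (hn : 3 ≤ n) (hX : inM X) : f3 X = ⁅so2Gen n, p1 X⁆ := by
  conv_lhs => rw [← hX.p1_add_p2_add_p3]
  rw [isLinearMap_f3.map_add, isLinearMap_f3.map_add, (inM3_p3 hX.1).f3_apply,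
    (inM1_p1 hX.1).couplesPlane.f3_apply hn (by norm_num),
    (inM2_p2 hX.1).couplesPlane.f3_apply hn (by norm_num)]
  module

theorem inM2_f2 (hn : 3 ≤ n) (hX : inM X) : inM2 (f2 X) :=
  f2_eq_lie_p2 hn hX ▸ inH_so2Gen.lie_inM2 (inM2_p2 hX.1).neg

theorem inM1_f3 (hn : 3 ≤ n) (hX : inM X) : inM1 (f3 X) :=
  f3_eq_lie_p1 hn hX ▸ inH_so2Gen.lie_inM1 (inM1_p1 hX.1)

theorem lie_so2Gen_lie (hA : inM1 A) (hB : inM2 B) :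
    ⁅⁅so2Gen n, A⁆, B⁆ = -⁅A, ⁅so2Gen n, B⁆⁆ := by
  rw [eq_neg_iff_add_eq_zero, ← leibniz_lie, (hA.lie_inM2 hB).so2Gen_lie]

/-- The left-hand side of the NKf condition for `f` at `X`. -/
noncomputable def nkDefect (s t : ℝ) (f : Matrix (Fin n) (Fin n) ℝ → Matrix (Fin n) (Fin n) ℝ)
    (X : Matrix (Fin n) (Fin n) ℝ) : Matrix (Fin n) (Fin n) ℝ :=
  (1 / 2 : ℝ) • pM (br (f X) (f (f X))) + Ust s t (f X) (f (f X)) - f (Ust s t (f X) (f X))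

theorem nkDefect_eq_of_eq_add {f : Matrix (Fin n) (Fin n) ℝ → Matrix (Fin n) (Fin n) ℝ}
    (hf : IsLinearMap ℝ f) (hf₃ : ∀ C, inM3 C → f C = 0) (hA : inM1 A) (hB : inM2 B)
    (hA' : inM1 A') (hB' : inM2 B') (hfX : f X = A + B) (hffX : f (f X) = A' + B') :
    nkDefect s t f X = (1 / 2 : ℝ) • (⁅A, B'⁆ - ⁅A', B⁆) +
      ((s - 1) / (2 * t)) • (⁅A, B'⁆ + ⁅A', B⁆) := by
  have hU : f (Ust s t (A + B) (A + B)) = 0 := by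
    rw [Ust_add_add hA hB hA hB, hf.map_smul, hf.map_add, hf₃ _ (hA.lie_inM2 hB), add_zero,
      smul_zero]
  rw [nkDefect, hffX, hfX, hU, sub_zero, br_eq_lie, pM_lie hA hB hA' hB',
    Ust_add_add hA hB hA' hB']

theorem nkDefect_f1 (hn : 3 ≤ n) (ht : t ≠ 0) (hX : inM X) :
    nkDefect s t f1 X = ((s - 1) / t) • ⁅p1 X, ⁅so2Gen n, p2 X⁆⁆ := by
  have hA : inM1 (p1 X) := inM1_p1 hX.1
  have hB : inM2 (-p2 X) := (inM2_p2 hX.1).neg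
  have hJA : inM1 ⁅so2Gen n, p1 X⁆ := inH_so2Gen.lie_inM1 hA
  have hJB : inM2 ⁅so2Gen n, -p2 X⁆ := inH_so2Gen.lie_inM2 hB
  have hff : f1 (f1 X) = -p1 X + -p2 X := by
    rw [f1_eq_lie_p1_add_lie_p2 hn hX, f1_eq_lie_p1_add_lie_p2 hn (hJA.add_inM2 hJB),
      p1_add hJA hJB, p2_add hJA hJB, lie_neg _ ⁅so2Gen n, -p2 X⁆,
      hA.couplesPlane.so2Gen_lie_so2Gen_lie hn,
      hB.couplesPlane.so2Gen_lie_so2Gen_lie hn, neg_neg]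
  rw [nkDefect_eq_of_eq_add isLinearMap_f1 (fun _ => inM3.f1_apply) hJA hJB hA.neg hB
    (f1_eq_lie_p1_add_lie_p2 hn hX) hff, lie_so2Gen_lie hA hB, lie_neg, lie_neg, neg_lie, lie_neg]
  match_scalars
  field_simp
  ring

theorem nkCond_f2 (hn : 3 ≤ n) : nkCond (n := n) s t f2 := fun X hX => by
  have hB : inM2 (f2 X) := inM2_f2 hn hX
  have hB' : inM2 (f2 (f2 X)) := inM2_f2 hn (zero_add (f2 X) ▸ inM1_zero.add_inM2 hB)
  change nkDefect s t f2 X = 0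
  rw [nkDefect_eq_of_eq_add isLinearMap_f2 (fun _ => inM3.f2_apply) inM1_zero hB inM1_zero hB'
    (zero_add _).symm (zero_add _).symm]
  simp only [zero_lie, sub_zero, add_zero, smul_zero]

theorem nkCond_f3 (hn : 3 ≤ n) : nkCond (n := n) s t f3 := fun X hX => by
  have hA : inM1 (f3 X) := inM1_f3 hn hX
  have hA' : inM1 (f3 (f3 X)) := inM1_f3 hn (add_zero (f3 X) ▸ hA.add_inM2 inM2_zero)
  change nkDefect s t f3 X = 0
  rw [nkDefect_eq_of_eq_add isLinearMap_f3 (fun _ => inM3.f3_apply) hA inM2_zero hA' inM2_zero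
    (add_zero _).symm (add_zero _).symm]
  simp only [lie_zero, sub_zero, add_zero, smul_zero]

theorem inM1_skewSingle {i j : Fin n} (hi : i.val = 0) (hj : j.val = 1 ∨ j.val = 2) :
    inM1 (skewSingle i j) := by
  refine ⟨transpose_skewSingle i j, fun k l h => ?_⟩
  simp only [skewSingle, Matrix.sub_apply, single_apply] at h
  grind

theorem inM2_skewSingle {i j : Fin n} (hi : i.val = 1 ∨ i.val = 2) (hj : 3 ≤ j.val) :
    inM2 (skewSingle i j) := by
  refine ⟨transpose_skewSingle i j, fun k l h => ?_⟩
  simp only [skewSingle, Matrix.sub_apply, single_apply] at h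
  grind

theorem exists_lie_p1_lie_so2Gen_p2_ne_zero (hn : 4 ≤ n) :
    ∃ X : Matrix (Fin n) (Fin n) ℝ, inM X ∧ ⁅p1 X, ⁅so2Gen n, p2 X⁆⁆ ≠ 0 := by
  obtain ⟨i₀, i₁, i₂, i₃, h₀, h₁, h₂, h₃⟩ : ∃ i₀ i₁ i₂ i₃ : Fin n,
      i₀.val = 0 ∧ i₁.val = 1 ∧ i₂.val = 2 ∧ i₃.val = 3 :=
    ⟨⟨0, by omega⟩, ⟨1, by omega⟩, ⟨2, by omega⟩, ⟨3, by omega⟩, rfl, rfl, rfl, rfl⟩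
  have hA : inM1 (skewSingle i₀ i₁) := inM1_skewSingle h₀ (.inl h₁)
  have hB : inM2 (skewSingle i₂ i₃) := inM2_skewSingle (.inr h₂) h₃.ge
  refine ⟨skewSingle i₀ i₁ + skewSingle i₂ i₃, hA.add_inM2 hB, fun h => ?_⟩
  rw [p1_add hA hB, p2_add hA hB, so2Gen_eq_skewSingle h₁ h₂,
    lie_skewSingle_skewSingle (by grind) (by grind) (by grind),
    lie_skewSingle_skewSingle (by grind) (by grind) (by grind)] at h
  have hentry : (skewSingle i₀ i₃ : Matrix (Fin n) (Fin n) ℝ) i₀ i₃ = 1 := by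
    have hne : i₃ ≠ i₀ := by grind
    simp [skewSingle, hne]
  rw [h, Matrix.zero_apply] at hentry
  exact zero_ne_one hentry

theorem nkCond_f1_iff (hn : 4 ≤ n) (ht : t ≠ 0) : nkCond (n := n) s t f1 ↔ s = 1 := by
  have hn₃ : 3 ≤ n := by omega
  refine ⟨fun h => ?_, fun hs X hX => ?_⟩
  · obtain ⟨X, hX, hne⟩ := exists_lie_p1_lie_so2Gen_p2_ne_zero hn
    have hdefect : ((s - 1) / t) • ⁅p1 X, ⁅so2Gen n, p2 X⁆⁆ = 0 :=
      (nkDefect_f1 hn₃ ht hX).symm.trans (h X hX)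
    have hcoeff : (s - 1) / t = 0 := (smul_eq_zero.1 hdefect).resolve_right hne
    exact sub_eq_zero.1 ((div_eq_zero_iff.1 hcoeff).resolve_right ht)
  · change nkDefect s t f1 X = 0
    rw [nkDefect_f1 hn₃ ht hX, hs, sub_self, zero_div, zero_smul]

end FlagMfld

/-- The hypothesis `s * t ≠ 0` says that `g_{s,t}` is nondegenerate, so indefinite invariant metrics
are included. -/
theorem statement17_general (n : ℕ) (hn : 4 ≤ n) (s t : ℝ) (hst : s * t ≠ 0) :
    (nkCond (n := n) s t f1 ↔ s = 1) ∧
    nkCond (n := n) s t f2 ∧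
    nkCond (n := n) s t f3 :=
  have hn₃ : 3 ≤ n := by omega
  ⟨nkCond_f1_iff hn (right_ne_zero_of_mul hst), nkCond_f2 hn₃, nkCond_f3 hn₃⟩

/-- On the 6-symmetric space `SO(n)/SO(2)×SO(n-3)`: `f₁` is a nearly
Kähler f-structure for `(s,t)` iff `s = 1`, while `f₂` and `f₃` are nearly Kähler
f-structures for all `s, t > 0`. -/
theorem statement17 (n : ℕ) (hn : 4 ≤ n) (s t : ℝ) (hs : 0 < s) (ht : 0 < t) :
    (nkCond (n := n) s t f1 ↔ s = 1) ∧
    nkCond (n := n) s t f2 ∧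
    nkCond (n := n) s t f3 :=
  statement17_general n hn s t (mul_pos hs ht).ne'
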